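/- Let n ≥ 1, N = 2n+1, and let a_0, …, a_n, b_1, …, b_n be real numbers with T_n(t) = a_0/2 + Σ_{k=1}^n (a_k cos kt + b_k sin kt). For a natural number r ≥ 1 set v_j(r) = j^{−(1+r)} and define the trigonometric spline ST(r,t) = a_0/2 + Σ_{k=1}^n H_k(r)^{−1} [a_k C_k(r,t) + b_k S_k(r,t)], where C_k(r,t) = v_k(r) cos kt + Σ_{m=1}^∞ [v_{mN+k}(r) cos((mN+k)t) + v_{mN−k}(r) cos((mN−k)t)], S_k(r,t) = v_k(r) sin kt + Σ_{m=1}^∞ [v_{mN+k}(r) sin((mN+k)t) − v_{mN−k}(r) sin((mN−k)t)], and H_k(r) = v_k(r) + Σ_{m=1}^∞ [v_{mN+k}(r) + v_{mN−k}(r)]. Then for every real t, ST(r,t) → T_n(t) as r → ∞ over the natural numbers. -/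

import Mathlib

open Real Finset Filter

/-!
The sums `C`, `S` and `H` run over all integers `j ≡ k (mod N)`, with weights `v |j|`. Separating
the term `j = k`, the rest of `H` is a tail `τ ≥ 0`, and since `|cos|, |sin| ≤ 1` the same `τ`
bounds the rest of `C` and of `S`. Hence `C / H` and `S / H` differ from `cos (k x)` and
`sin (k x)` by at most `2 τ / v k`, uniformly in `x`. When `2 k < N`, every other
`j ≡ k (mod N)` has `|j| > k`, so for `v j = j ^ (-(1 + r))` the quotient `τ / v k` is a sum of
`(1 + r)`-th powers of numbers in `[0, 1)`, which tends to `0` by dominated convergence.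
-/

/-- The interpolation trigonometric polynomial, written `T_n` in the paper. -/
noncomputable def trigPoly (n : ℕ) (a0 : ℝ) (a b : ℕ → ℝ) (x : ℝ) : ℝ :=
  a0 / 2 + ∑ k ∈ Icc 1 n, (a k * Real.cos (k * x) + b k * Real.sin (k * x))

/-- The power-type convergence factors `j ^ (-(1 + r))`, with value `0` at `j = 0`. -/
noncomputable def powerFactor (r j : ℕ) : ℝ :=
  ((j : ℝ) ^ (1 + r))⁻¹

/-- The total weight of the frequencies `(m + 1) N ± k` that alias to `k` on a grid of `N` points;
in the paper's notation it is `H_k - v_k`. -/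
noncomputable def aliasTail (N : ℕ) (v : ℕ → ℝ) (k : ℕ) : ℝ :=
  ∑' m : ℕ, (v ((m + 1) * N + k) + v ((m + 1) * N - k))

/-- For `k ≤ N`, where the subtraction does not truncate, the weighted sum of `g (j * x)` over all
integers `j ≡ k (mod N)`, the weight being `v |j|`. As `cos` is even and `sin` is odd, `g = cos`
gives the paper's `C_k` and `g = sin` gives `S_k`. -/
noncomputable def aliasSeries (N : ℕ) (v : ℕ → ℝ) (g : ℝ → ℝ) (k : ℕ) (x : ℝ) : ℝ :=
  v k * g (k * x) + ∑' m : ℕ,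
    (v ((m + 1) * N + k) * g (((m + 1) * N + k : ℕ) * x) +
      v ((m + 1) * N - k) * g (-(((m + 1) * N - k : ℕ) * x)))

/-- The interpolation trigonometric spline with convergence factors `v`, written `ST` in the
paper. -/
noncomputable def trigSpline (n N : ℕ) (v : ℕ → ℝ) (a0 : ℝ) (a b : ℕ → ℝ) (x : ℝ) : ℝ :=
  a0 / 2 + ∑ k ∈ Icc 1 n, (v k + aliasTail N v k)⁻¹ *
    (a k * aliasSeries N v Real.cos k x + b k * aliasSeries N v Real.sin k x)

section Estimate

variable {n N k : ℕ} {v : ℕ → ℝ} {g : ℝ → ℝ}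

lemma aliasTail_nonneg (hv : ∀ j, 0 ≤ v j) : 0 ≤ aliasTail N v k :=
  tsum_nonneg fun _ => add_nonneg (hv _) (hv _)

lemma abs_aliasSeries_sub_le (hv : ∀ j, 0 ≤ v j)
    (hsum : Summable fun m : ℕ => v ((m + 1) * N + k) + v ((m + 1) * N - k))
    (hg : ∀ y, |g y| ≤ 1) (x : ℝ) :
    |aliasSeries N v g k x - v k * g (k * x)| ≤ aliasTail N v k := by
  have abs_term_le (j : ℕ) (y : ℝ) : |v j * g y| ≤ v j := by
    rw [abs_mul, abs_of_nonneg (hv j)]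
    exact mul_le_of_le_one_right (hv j) (hg y)
  rw [aliasSeries, add_sub_cancel_left, ← Real.norm_eq_abs]
  refine tsum_of_norm_bounded hsum.hasSum fun m => ?_
  exact norm_add_le_of_le (abs_term_le _ _) (abs_term_le _ _)

lemma abs_inv_mul_sub_le {w τ A y : ℝ} (hw : 0 < w) (hτ : 0 ≤ τ) (hy : |y| ≤ 1)
    (hA : |A - w * y| ≤ τ) : |(w + τ)⁻¹ * A - y| ≤ 2 * (τ / w) := by
  have hwτ : 0 < w + τ := by positivity
  have hnum : |A - w * y - τ * y| ≤ 2 * τ :=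
    calc |A - w * y - τ * y| ≤ |A - w * y| + |τ * y| := abs_sub _ _
      _ ≤ τ + τ * 1 := by
        rw [abs_mul, abs_of_nonneg hτ]
        gcongr
      _ = 2 * τ := by ring
  have hquot : (w + τ)⁻¹ * A - y = (A - w * y - τ * y) / (w + τ) := by
    field_simp
    ring
  calc |(w + τ)⁻¹ * A - y| = |A - w * y - τ * y| / (w + τ) := by
        rw [hquot, abs_div, abs_of_pos hwτ]
    _ ≤ 2 * τ / w := by
        gcongr
        exact le_add_of_nonneg_right hτ
    _ = 2 * (τ / w) := mul_div_assoc _ _ _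

lemma abs_inv_mul_aliasSeries_sub_le (hv : ∀ j, 0 ≤ v j) (hk : 0 < v k)
    (hsum : Summable fun m : ℕ => v ((m + 1) * N + k) + v ((m + 1) * N - k))
    (hg : ∀ y, |g y| ≤ 1) (x : ℝ) :
    |(v k + aliasTail N v k)⁻¹ * aliasSeries N v g k x - g (k * x)| ≤
      2 * (aliasTail N v k / v k) :=
  abs_inv_mul_sub_le hk (aliasTail_nonneg hv) (hg _) (abs_aliasSeries_sub_le hv hsum hg x)

lemma abs_trigSpline_sub_trigPoly_le (a0 : ℝ) (a b : ℕ → ℝ) (hv : ∀ j, 0 ≤ v j)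
    (hpos : ∀ k ∈ Icc 1 n, 0 < v k)
    (hsum : ∀ k ∈ Icc 1 n, Summable fun m : ℕ => v ((m + 1) * N + k) + v ((m + 1) * N - k))
    (x : ℝ) :
    |trigSpline n N v a0 a b x - trigPoly n a0 a b x| ≤
      ∑ k ∈ Icc 1 n, (|a k| + |b k|) * (2 * (aliasTail N v k / v k)) := by
  rw [trigSpline, trigPoly, add_sub_add_left_eq_sub, ← sum_sub_distrib]
  refine (abs_sum_le_sum_abs _ _).trans (sum_le_sum fun k hk => ?_)
  set h := (v k + aliasTail N v k)⁻¹
  set c := aliasSeries N v Real.cos k x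
  set s := aliasSeries N v Real.sin k x
  have hc : |h * c - Real.cos (k * x)| ≤ 2 * (aliasTail N v k / v k) :=
    abs_inv_mul_aliasSeries_sub_le hv (hpos k hk) (hsum k hk) Real.abs_cos_le_one x
  have hs : |h * s - Real.sin (k * x)| ≤ 2 * (aliasTail N v k / v k) :=
    abs_inv_mul_aliasSeries_sub_le hv (hpos k hk) (hsum k hk) Real.abs_sin_le_one x
  calc |h * (a k * c + b k * s) - (a k * Real.cos (k * x) + b k * Real.sin (k * x))|
      = |a k * (h * c - Real.cos (k * x)) + b k * (h * s - Real.sin (k * x))| := by ring_nf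
    _ ≤ |a k| * |h * c - Real.cos (k * x)| + |b k| * |h * s - Real.sin (k * x)| := by
        simpa only [abs_mul] using abs_add_le (a k * _) (b k * _)
    _ ≤ (|a k| + |b k|) * (2 * (aliasTail N v k / v k)) := by
        rw [add_mul]
        gcongr

end Estimate

lemma tendstoUniformly_trigSpline {ι : Type*} {l : Filter ι} {n N : ℕ} {v : ι → ℕ → ℝ}
    (a0 : ℝ) (a b : ℕ → ℝ) (hv : ∀ᶠ i in l, ∀ j, 0 ≤ v i j)
    (hpos : ∀ᶠ i in l, ∀ k ∈ Icc 1 n, 0 < v i k)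
    (hsum : ∀ᶠ i in l, ∀ k ∈ Icc 1 n,
      Summable fun m : ℕ => v i ((m + 1) * N + k) + v i ((m + 1) * N - k))
    (hlim : ∀ k ∈ Icc 1 n, Tendsto (fun i => aliasTail N (v i) k / v i k) l (nhds 0)) :
    TendstoUniformly (fun i => trigSpline n N (v i) a0 a b) (trigPoly n a0 a b) l := by
  have hbound : Tendsto (fun i => ∑ k ∈ Icc 1 n,
      (|a k| + |b k|) * (2 * (aliasTail N (v i) k / v i k))) l (nhds 0) := by
    simpa only [mul_zero, sum_const_zero] using
      tendsto_finsetSum (Icc 1 n) fun k hk =>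
        ((hlim k hk).const_mul 2).const_mul (|a k| + |b k|)
  rw [Metric.tendstoUniformly_iff]
  intro ε hε
  filter_upwards [hv, hpos, hsum, hbound.eventually_lt_const hε] with i hvi hposi hsumi hlt x
  rw [dist_comm, Real.dist_eq]
  exact (abs_trigSpline_sub_trigPoly_le a0 a b hvi hposi hsumi x).trans_lt hlt

lemma tendsto_tsum_pow_atTop_nhds_zero {ι : Type*} {f : ι → ℝ} {d : ℕ} (hf₀ : ∀ i, 0 ≤ f i)
    (hf₁ : ∀ i, f i < 1) (hsum : Summable fun i => f i ^ d) :
    Tendsto (fun r : ℕ => ∑' i, f i ^ r) atTop (nhds 0) := by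
  rw [← tsum_zero (β := ι)]
  refine tendsto_tsum_of_dominated_convergence hsum
    (fun i => tendsto_pow_atTop_nhds_zero_of_lt_one (hf₀ i) (hf₁ i)) ?_
  filter_upwards [eventually_ge_atTop d] with r hr i
  rw [Real.norm_of_nonneg (pow_nonneg (hf₀ i) r)]
  exact pow_le_pow_of_le_one (hf₀ i) (hf₁ i).le hr

section PowerFactor

lemma powerFactor_nonneg (r j : ℕ) : 0 ≤ powerFactor r j := by
  unfold powerFactor
  positivity

lemma powerFactor_pos (r : ℕ) {j : ℕ} (hj : 0 < j) : 0 < powerFactor r j := by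
  unfold powerFactor
  positivity

lemma powerFactor_div_powerFactor (r j k : ℕ) :
    powerFactor r j / powerFactor r k = ((k : ℝ) / j) ^ (r + 1) := by
  rw [powerFactor, powerFactor, inv_div_inv, div_pow, add_comm]

variable {j : ℕ → ℕ} {k N r : ℕ}

lemma summable_powerFactor_comp (hj : ∀ m, m < j m) (hr : 1 ≤ r) :
    Summable fun m => powerFactor r (j m) := by
  have hshift : Summable fun m : ℕ => (((m + 1 : ℕ) : ℝ) ^ (1 + r))⁻¹ :=
    (summable_nat_add_iff 1).2 (Real.summable_nat_pow_inv.2 (by lia))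
  refine hshift.of_nonneg_of_le (fun m => powerFactor_nonneg r _) fun m => ?_
  rw [powerFactor]
  gcongr
  exact hj m

lemma tendsto_tsum_powerFactor_div (hj : ∀ m, m < j m) (hk : ∀ m, k < j m) :
    Tendsto (fun r => (∑' m, powerFactor r (j m)) / powerFactor r k) atTop (nhds 0) := by
  have hlt (m : ℕ) : (k : ℝ) / j m < 1 :=
    (div_lt_one (by exact_mod_cast (Nat.zero_le k).trans_lt (hk m))).2 (by exact_mod_cast hk m)
  have hsum : Summable fun m => ((k : ℝ) / j m) ^ 2 := by
    simpa only [powerFactor_div_powerFactor] using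
      (summable_powerFactor_comp hj le_rfl).div_const (powerFactor 1 k)
  simp only [← tsum_div_const, powerFactor_div_powerFactor]
  exact (tendsto_tsum_pow_atTop_nhds_zero (fun m => by positivity) hlt hsum).comp
    (tendsto_add_atTop_nat 1)

lemma mul_add_lt_succ_mul_sub (hk : 2 * k < N) (m : ℕ) : m * N + k < (m + 1) * N - k := by
  rw [add_one_mul]
  lia

lemma lt_succ_mul_sub (hk : 2 * k < N) (m : ℕ) : m < (m + 1) * N - k :=
  calc m ≤ m * N := Nat.le_mul_of_pos_right m (by lia)
    _ ≤ m * N + k := Nat.le_add_right _ _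
    _ < (m + 1) * N - k := mul_add_lt_succ_mul_sub hk m

lemma lt_succ_mul_add (hN : 0 < N) (k m : ℕ) : m < (m + 1) * N + k :=
  Nat.lt_add_right k (Nat.le_mul_of_pos_right (m + 1) hN)

lemma summable_powerFactor_alias_add (hN : 0 < N) (hr : 1 ≤ r) :
    Summable fun m : ℕ => powerFactor r ((m + 1) * N + k) :=
  summable_powerFactor_comp (lt_succ_mul_add hN k) hr

lemma summable_powerFactor_alias_sub (hk : 2 * k < N) (hr : 1 ≤ r) :
    Summable fun m : ℕ => powerFactor r ((m + 1) * N - k) :=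
  summable_powerFactor_comp (lt_succ_mul_sub hk) hr

lemma tendsto_aliasTail_powerFactor_div (hk : 2 * k < N) :
    Tendsto (fun r => aliasTail N (powerFactor r) k / powerFactor r k) atTop (nhds 0) := by
  have hN : 0 < N := (Nat.zero_le _).trans_lt hk
  have hadd : Tendsto (fun r => (∑' m : ℕ, powerFactor r ((m + 1) * N + k)) / powerFactor r k)
      atTop (nhds 0) :=
    tendsto_tsum_powerFactor_div (lt_succ_mul_add hN k)
      fun m => Nat.lt_add_of_pos_left (by positivity)
  have hsub : Tendsto (fun r => (∑' m : ℕ, powerFactor r ((m + 1) * N - k)) / powerFactor r k)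
      atTop (nhds 0) :=
    tendsto_tsum_powerFactor_div (lt_succ_mul_sub hk)
      fun m => (Nat.le_add_left k _).trans_lt (mul_add_lt_succ_mul_sub hk m)
  rw [← add_zero (0 : ℝ)]
  refine (hadd.add hsub).congr' ?_
  filter_upwards [eventually_ge_atTop 1] with r hr
  rw [aliasTail, (summable_powerFactor_alias_add hN hr).tsum_add
    (summable_powerFactor_alias_sub hk hr), add_div]

end PowerFactor

theorem spline_tendsto_poly_r_general {n N : ℕ} (hN : 2 * n < N) (a0 : ℝ) (a b : ℕ → ℝ) :
    TendstoUniformly (fun r => trigSpline n N (powerFactor r) a0 a b) (trigPoly n a0 a b)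
      atTop := by
  have two_mul_lt {k : ℕ} (hk : k ∈ Icc 1 n) : 2 * k < N := by
    have := (mem_Icc.1 hk).2
    lia
  refine tendstoUniformly_trigSpline a0 a b (.of_forall powerFactor_nonneg)
    (.of_forall fun r k hk => powerFactor_pos r (mem_Icc.1 hk).1) ?_
    fun k hk => tendsto_aliasTail_powerFactor_div (two_mul_lt hk)
  filter_upwards [eventually_ge_atTop 1] with r hr k hk
  exact (summable_powerFactor_alias_add ((Nat.zero_le _).trans_lt hN) hr).add
    (summable_powerFactor_alias_sub (two_mul_lt hk) hr)

/-- Theorem 2 of the paper (grid `Δ_N^{(0)}`, power-type factors `v r j = j^{-(1+r)}`):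
for every real `t`, the trigonometric spline `ST r t` converges to the interpolation
trigonometric polynomial `T t` as the smoothness parameter `r → ∞`. -/
theorem spline_tendsto_poly_r
    (n N : ℕ) (hn : 1 ≤ n) (hN : N = 2 * n + 1)
    (a0 : ℝ) (a b : ℕ → ℝ)
    (T : ℝ → ℝ)
    (hT : ∀ x, T x = a0 / 2 +
      ∑ k ∈ Finset.Icc 1 n, (a k * Real.cos ((k : ℝ) * x) + b k * Real.sin ((k : ℝ) * x)))
    (v : ℕ → ℕ → ℝ) (hv : ∀ r j, v r j = (((j : ℝ)) ^ (1 + r))⁻¹)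
    (C S : ℕ → ℕ → ℝ → ℝ) (H : ℕ → ℕ → ℝ)
    (hC : ∀ (r : ℕ), 1 ≤ r → ∀ (k : ℕ) (x : ℝ),
      C r k x = v r k * Real.cos ((k : ℝ) * x) +
        ∑' m : ℕ, (v r ((m + 1) * N + k) * Real.cos ((((m + 1) * N + k : ℕ) : ℝ) * x) +
          v r ((m + 1) * N - k) * Real.cos ((((m + 1) * N - k : ℕ) : ℝ) * x)))
    (hS : ∀ (r : ℕ), 1 ≤ r → ∀ (k : ℕ) (x : ℝ),
      S r k x = v r k * Real.sin ((k : ℝ) * x) +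
        ∑' m : ℕ, (v r ((m + 1) * N + k) * Real.sin ((((m + 1) * N + k : ℕ) : ℝ) * x) -
          v r ((m + 1) * N - k) * Real.sin ((((m + 1) * N - k : ℕ) : ℝ) * x)))
    (hH : ∀ (r : ℕ), 1 ≤ r → ∀ (k : ℕ),
      H r k = v r k + ∑' m : ℕ, (v r ((m + 1) * N + k) + v r ((m + 1) * N - k)))
    (ST : ℕ → ℝ → ℝ)
    (hST : ∀ (r : ℕ), 1 ≤ r → ∀ (x : ℝ), ST r x = a0 / 2 +
      ∑ k ∈ Finset.Icc 1 n, (H r k)⁻¹ * (a k * C r k x + b k * S r k x)) :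
    ∀ x : ℝ, Tendsto (fun r : ℕ => ST r x) atTop (nhds (T x)) := by
  intro x
  obtain rfl : v = powerFactor := funext₂ hv
  obtain rfl : T = trigPoly n a0 a b := funext hT
  have hlim := (spline_tendsto_poly_r_general (n := n) (N := N) (by lia) a0 a b).tendsto_at x
  refine hlim.congr' ?_
  filter_upwards [eventually_ge_atTop 1] with r hr
  simp only [hST r hr, hH r hr, hC r hr, hS r hr, trigSpline, aliasTail, aliasSeries,
    Real.cos_neg, Real.sin_neg, mul_neg, sub_eq_add_neg]
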